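/- arXiv:0708.4381 — 3 statements merged into one kernel-verified Lean document; each statement's English description precedes it below -/
import Mathlib

section
/- Let F be a finite field and suppose a subgroup H of the projective general linear group PGL(n, F) is isomorphic to the alternating group A_{4d₁} for some positive integer d₁. Then n ≥ d₁. -/
open Module
open scoped commutatorElement

/-- A finite commuting family of distinct `ℓ`-torsion endomorphisms of a space of dimension `n`
over an algebraically closed field in which `ℓ` is invertible has at most `ℓ ^ n` members. -/
theorem Module.End.card_le_pow_finrank_of_pow_eq_one {K V ι : Type*} [Field K] [IsAlgClosed K]
    [AddCommGroup V] [Module K V] [FiniteDimensional K V] [Finite ι] {ℓ : ℕ}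
    (hℓ : (ℓ : K) ≠ 0) (f : ι → End K V) (hf : Function.Injective f)
    (hcomm : ∀ i j, Commute (f i) (f j)) (hpow : ∀ i, f i ^ ℓ = 1) :
    Nat.card ι ≤ ℓ ^ finrank K V := by
  have hℓ0 : 0 < ℓ := Nat.pos_of_ne_zero (by rintro rfl; simp at hℓ)
  have hss (i) : (f i).IsSemisimple :=
    isSemisimple_of_squarefree_aeval_eq_zero
      (Polynomial.separable_X_pow_sub_C (1 : K) hℓ one_ne_zero).squarefree (by simp [hpow])
  let W : (ι → K) → Submodule K V := fun χ ↦ ⨅ i, (f i).maxGenEigenspace (χ i)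
  have htop : ⨆ χ, W χ = ⊤ :=
    iSup_iInf_maxGenEigenspace_eq_top_of_iSup_maxGenEigenspace_eq_top_of_commute f
      (fun i j _ ↦ hcomm i j) (fun i ↦ iSup_maxGenEigenspace_eq_top (f i))
  have hind : iSupIndep W := independent_iInf_maxGenEigenspace_of_forall_mapsTo f
    fun i j φ ↦ mapsTo_maxGenEigenspace_of_comm (hcomm j i) φ
  have happly {χ : ι → K} {v : V} (hv : v ∈ W χ) (i : ι) : f i v = χ i • v := by
    have := (Submodule.mem_iInf _).1 hv i
    rwa [(hss i).isFinitelySemisimple.maxGenEigenspace_eq_eigenspace, mem_eigenspace_iff] at this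
  have happly_pow {χ : ι → K} {v : V} (hv : v ∈ W χ) (i : ι) (k : ℕ) :
      (f i ^ k) v = χ i ^ k • v := by
    induction k with
    | zero => simp
    | succ k ih => rw [pow_succ', Module.End.mul_apply, ih, map_smul, happly hv, smul_smul, pow_succ]
  let S := {χ : ι → K // W χ ≠ ⊥}
  let _ : Fintype S := hind.fintypeNeBotOfFiniteDimensional
  have hroot (i : ι) (χ : S) : χ.1 i ∈ Polynomial.nthRootsFinset ℓ (1 : K) := by
    obtain ⟨v, hv, hv0⟩ := Submodule.exists_mem_ne_zero_of_ne_bot χ.2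
    have := happly_pow hv i ℓ
    rw [hpow, Module.End.one_apply] at this
    rw [Polynomial.mem_nthRootsFinset hℓ0]
    by_contra hne
    exact hne (smul_left_injective K hv0 (by simpa using this.symm))
  let g : ι → S → Polynomial.nthRootsFinset ℓ (1 : K) := fun i χ ↦ ⟨χ.1 i, hroot i χ⟩
  have hg : Function.Injective g := by
    intro i j hij
    apply hf
    have hle : ⨆ χ, W χ ≤ LinearMap.ker (f i - f j) := by
      refine iSup_le fun χ v hv ↦ ?_
      by_cases hχ : W χ = ⊥
      · rw [hχ, Submodule.mem_bot] at hv
        simp [hv]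
      · have : χ i = χ j := congrArg Subtype.val (congrFun hij ⟨χ, hχ⟩)
        simp [happly hv, this]
    rw [htop, top_le_iff, LinearMap.ker_eq_top] at hle
    exact sub_eq_zero.1 hle
  calc Nat.card ι ≤ Nat.card (S → Polynomial.nthRootsFinset ℓ (1 : K)) :=
        Nat.card_le_card_of_injective g hg
    _ = (Polynomial.nthRootsFinset ℓ (1 : K)).card ^ Fintype.card S := by
        rw [Nat.card_fun, Nat.card_eq_fintype_card, Nat.card_eq_fintype_card, Fintype.card_coe]
    _ ≤ ℓ ^ Fintype.card S := by
        gcongr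
        classical
        exact (Multiset.toFinset_card_le _).trans (Polynomial.card_nthRoots ℓ 1)
    _ ≤ ℓ ^ finrank K V :=
        Nat.pow_le_pow_right hℓ0 hind.subtype_ne_bot_le_finrank

/-- Commuting invertible matrices of size `n`, pairwise distinct and `ℓ`-torsion modulo the center,
number at most `ℓ ^ n` when `ℓ` is invertible. -/
theorem Matrix.GeneralLinearGroup.card_le_pow_of_commute {F E : Type*} [Field F] [Finite E]
    {n ℓ : ℕ}
    (hℓ : (ℓ : F) ≠ 0) (s : E → GL (Fin n) F)
    (hs : Function.Injective fun e ↦ (s e : GL (Fin n) F ⧸ Subgroup.center (GL (Fin n) F)))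
    (hcomm : ∀ a b, Commute (s a) (s b)) (hpow : ∀ a, s a ^ ℓ ∈ Subgroup.center (GL (Fin n) F)) :
    Nat.card E ≤ ℓ ^ n := by
  have hℓ0 : 0 < ℓ := Nat.pos_of_ne_zero (by rintro rfl; simp at hℓ)
  let K := AlgebraicClosure F
  let m : Matrix (Fin n) (Fin n) F →+* Matrix (Fin n) (Fin n) K := (algebraMap F K).mapMatrix
  have hm : Function.Injective m := Matrix.map_injective (algebraMap F K).injective
  rcases Nat.eq_zero_or_pos n with rfl | hn
  · have : Subsingleton E := hs.subsingleton
    simpa using Finite.card_le_one_iff_subsingleton.2 this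
  have : Nonempty (Fin n) := ⟨⟨0, hn⟩⟩
  have hr (e : E) : ∃ r : K, r ≠ 0 ∧ m (s e).val ^ ℓ = r ^ ℓ • (1 : Matrix (Fin n) (Fin n) K) := by
    obtain ⟨c, hc⟩ := mem_center_iff_val_mem_range_scalar.1 (hpow e)
    obtain ⟨r, hr⟩ := IsAlgClosed.exists_pow_nat_eq (algebraMap F K c) hℓ0
    have key : m (s e).val ^ ℓ = r ^ ℓ • (1 : Matrix (Fin n) (Fin n) K) := by
      rw [← map_pow, ← Units.val_pow_eq_pow_val, ← hc, hr]
      ext i j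
      by_cases h : i = j <;> simp [m, h]
    refine ⟨r, ?_, key⟩
    rintro rfl
    have hu : IsUnit (m (s e).val ^ ℓ) := ((s e).isUnit.map m).pow ℓ
    rw [key] at hu
    simp [hℓ0.ne'] at hu
  choose r hr0 hr using hr
  have hinj : Function.Injective fun e ↦ (r e)⁻¹ • m (s e).val := by
    intro a b hab
    apply hs
    simp only at hab ⊢
    rw [QuotientGroup.eq]
    have hab' : m (s b).val = (r b * (r a)⁻¹) • m (s a).val := by
      rw [mul_smul, hab, smul_smul, mul_inv_cancel₀ (hr0 b), one_smul]
    have hq : m ((s a)⁻¹ * s b).val = (r b * (r a)⁻¹) • 1 := by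
      rw [Units.val_mul, map_mul, hab', mul_smul_comm, ← map_mul, ← Units.val_mul]
      simp
    rw [Subgroup.mem_center_iff]
    intro g
    apply Units.ext
    apply hm
    rw [Units.val_mul g, Units.val_mul (_ * _) g, map_mul, map_mul, hq]
    simp
  have := Module.End.card_le_pow_finrank_of_pow_eq_one (K := K) (V := Fin n → K) (ℓ := ℓ)
    (by simpa using (map_ne_zero (algebraMap F K)).2 hℓ)
    (fun e ↦ Matrix.toLinAlgEquiv' ((r e)⁻¹ • m (s e).val))
    (Matrix.toLinAlgEquiv'.injective.comp hinj)
    (fun a b ↦ Commute.map (f := Matrix.toLinAlgEquiv')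
      (((Commute.map (congrArg Units.val (hcomm a b)) m).smul_left _).smul_right _))
    (fun e ↦ by
      rw [← map_pow, smul_pow, hr, smul_smul, ← mul_pow, inv_mul_cancel₀ (hr0 e)]
      simp)
  simpa using this

/-- Commutators of elements commuting with `g` modulo the center commute with `g`. -/
theorem commute_commutatorElement_of_mem_center {G : Type*} [Group G] {u v g : G}
    (hu : ⁅u, g⁆ ∈ Subgroup.center G) (hv : ⁅v, g⁆ ∈ Subgroup.center G) :
    Commute ⁅u, v⁆ g := by
  have key {w : G} : SemiconjBy w g (⁅w, g⁆ * g) := by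
    simp [SemiconjBy, commutatorElement_def]
  have hcentral {x c : G} (hc : c ∈ Subgroup.center G) : SemiconjBy x c c :=
    Subgroup.mem_center_iff.1 hc x
  have huv : SemiconjBy (u * v) g (⁅v, g⁆ * (⁅u, g⁆ * g)) :=
    ((hcentral hv).mul_right key).mul_left key
  have hvu : SemiconjBy (v * u) g (⁅u, g⁆ * (⁅v, g⁆ * g)) :=
    ((hcentral hu).mul_right key).mul_left key
  have huvg : ⁅v, g⁆ * (⁅u, g⁆ * g) = ⁅u, g⁆ * (⁅v, g⁆ * g) := by
    rw [← mul_assoc, (hcentral hv).eq.symm, mul_assoc]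
  have h := huv.mul_left hvu.inv_symm_left
  rw [huvg, show u * v * (v * u)⁻¹ = ⁅u, v⁆ by group, ← mul_assoc] at h
  simpa only [inv_mul_cancel_left, Commute] using (hcentral (inv_mem (mul_mem hu hv))).mul_right h

theorem Subgroup.eq_top_of_mulSingle_mem {ι P : Type*} [Finite ι] [DecidableEq ι] [Group P] {t : P}
    {K : Subgroup (ι → zpowers t)}
    (hK : ∀ i, Pi.mulSingle i ⟨t, mem_zpowers t⟩ ∈ K) : K = ⊤ := by
  refine (eq_top_iff' K).2 fun x ↦ pi_mem_of_mulSingle_mem x fun i ↦ ?_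
  obtain ⟨k, hk⟩ := mem_zpowers_iff.1 (x i).2
  rw [show x i = ⟨t, mem_zpowers t⟩ ^ k from Subtype.ext hk.symm, Pi.mulSingle_zpow]
  exact zpow_mem (hK i) k

/-- Families of permutations of four letters, acting on `4 * d` letters in `d` disjoint blocks. -/
def Equiv.Perm.blockHom (d : ℕ) : (Fin d → Equiv.Perm (Fin 4)) →* Equiv.Perm (Fin (4 * d)) where
  toFun a := ((Equiv.prodComm _ _).trans finProdFinEquiv).permCongr (Equiv.prodCongrRight a)
  map_one' := by ext x; simp [Nat.mod_add_div]
  map_mul' a b := by ext x; simp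

theorem Equiv.Perm.blockHom_injective (d : ℕ) : Function.Injective (blockHom d) := by
  intro a b h
  have := (Equiv.permCongr _).injective h
  ext i x
  simpa using congrArg Fin.val (congrArg Prod.snd (Equiv.congr_fun this (i, x)))

theorem Equiv.Perm.sign_blockHom {d : ℕ} (a : Fin d → Equiv.Perm (Fin 4)) :
    sign (blockHom d a) = ∏ i, sign (a i) := by
  simp [blockHom, Equiv.Perm.sign_permCongr, Equiv.Perm.sign_prodCongrRight]

/-- The elements of `X` having a lift to `G` that commutes with `g`. -/
def liftCentralizer {G X : Type*} [Group G] [Group X] (p : X →* G ⧸ Subgroup.center G) (g : G) :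
    Subgroup X :=
  ((Subgroup.centralizer {g}).map (QuotientGroup.mk' _)).comap p

theorem mem_liftCentralizer {G X : Type*} [Group G] [Group X] {p : X →* G ⧸ Subgroup.center G}
    {g h : G} {x : X} (hx : (h : G ⧸ Subgroup.center G) = p x) :
    x ∈ liftCentralizer p g ↔ Commute h g := by
  rw [liftCentralizer, Subgroup.mem_comap, Subgroup.mem_map, ← hx]
  constructor
  · rintro ⟨k, hk, hkh⟩
    obtain ⟨z, hz, rfl⟩ := (QuotientGroup.mk'_eq_mk' _).1 hkh
    exact Commute.mul_left (Subgroup.mem_centralizer_singleton_iff.1 hk)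
      (Subgroup.mem_center_iff.1 hz g).symm
  · exact fun hc ↦ ⟨h, Subgroup.mem_centralizer_singleton_iff.2 hc, rfl⟩

theorem commutatorElement_mem_liftCentralizer {G X : Type*} [Group G] [Group X]
    {p : X →* G ⧸ Subgroup.center G} {g : G} {x u v : X} (hx : (g : G ⧸ Subgroup.center G) = p x)
    (hu : Commute u x) (hv : Commute v x) : ⁅u, v⁆ ∈ liftCentralizer p g := by
  obtain ⟨a, ha⟩ := QuotientGroup.mk_surjective (p u)
  obtain ⟨b, hb⟩ := QuotientGroup.mk_surjective (p v)
  have hcenter {c : G} {w : X} (hc : (c : G ⧸ Subgroup.center G) = p w) (hw : Commute w x) :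
      ⁅c, g⁆ ∈ Subgroup.center G := by
    rw [← QuotientGroup.eq_one_iff, ← QuotientGroup.mk'_apply, map_commutatorElement,
      commutatorElement_eq_one_iff_commute]
    simpa [hc, hx] using hw.map p
  rw [mem_liftCentralizer (h := ⁅a, b⁆)]
  · exact commute_commutatorElement_of_mem_center (hcenter ha hu) (hcenter hb hv)
  · rw [← QuotientGroup.mk'_apply, map_commutatorElement, map_commutatorElement]
    simp [ha, hb]

open Equiv.Perm in
/-- If `t` is the commutator of an odd and an even permutation of four letters, then the product of
`d ≥ 3` copies of the group generated by `t` lifts to commuting elements in any central extension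
by the full center whose quotient contains the alternating group on `4 * d` letters. -/
theorem exists_commuting_lifts {G : Type*} [Group G] {d : ℕ} (hd : 3 ≤ d)
    {φ : alternatingGroup (Fin (4 * d)) →* G ⧸ Subgroup.center G} (hφ : Function.Injective φ)
    {t u v : Equiv.Perm (Fin 4)} (hu : sign u = -1) (hv : sign v = 1) (ht : ⁅u, v⁆ = t) :
    ∃ s : (Fin d → Subgroup.zpowers t) → G,
      (Function.Injective fun a ↦ (s a : G ⧸ Subgroup.center G)) ∧
      (∀ a b, Commute (s a) (s b)) ∧ ∀ a, s a ^ orderOf t ∈ Subgroup.center G := by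
  let X := (alternatingGroup (Fin (4 * d))).comap (blockHom d)
  let p : X →* G ⧸ Subgroup.center G := φ.comp ((blockHom d).subgroupComap _)
  have hX (a : Fin d → Equiv.Perm (Fin 4)) : a ∈ X ↔ ∏ i, sign (a i) = 1 := by
    rw [Subgroup.mem_comap, mem_alternatingGroup, sign_blockHom]
  have hp : Function.Injective p := hφ.comp fun a b hab ↦
    Subtype.ext (blockHom_injective d (congrArg Subtype.val hab))
  have hsign_t : sign t = 1 := by
    rw [← ht, map_commutatorElement, commutatorElement_eq_one_iff_commute]
    exact Commute.all _ _
  let τ : (Fin d → Subgroup.zpowers t) →* X :=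
    ((Subgroup.zpowers t).subtype.compLeft (Fin d)).codRestrict X fun a ↦ by
      rw [hX]
      refine Finset.prod_eq_one fun i _ ↦ ?_
      obtain ⟨k, hk⟩ := Subgroup.mem_zpowers_iff.1 (a i).2
      simp [← hk, hsign_t]
  have hτ : Function.Injective τ := by
    intro a b hab
    ext i : 2
    exact congrFun (congrArg Subtype.val hab) i
  choose s hs using fun a ↦ QuotientGroup.mk_surjective (p (τ a))
  have hmem (a b) : a ∈ (liftCentralizer p (s b)).comap τ ↔ Commute (s a) (s b) :=
    mem_liftCentralizer (hs a)
  let c : Fin d → Fin d → Subgroup.zpowers t :=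
    fun i ↦ Pi.mulSingle i ⟨t, Subgroup.mem_zpowers t⟩
  have hτc (i) : (τ (c i)).1 = Pi.mulSingle i t := by
    ext j : 1
    rcases eq_or_ne j i with rfl | h
    · simp [τ, c]
    · simp [τ, c, h]
  have hcc (i j) : Commute (s (c i)) (s (c j)) := by
    rcases eq_or_ne i j with rfl | hij
    · exact Commute.refl _
    obtain ⟨k, hki, hkj⟩ : ∃ k, k ≠ i ∧ k ≠ j := by
      obtain ⟨k, hk⟩ := Finset.exists_mem_notMem_of_card_lt_card
        (s := {i, j}) (t := Finset.univ) (Finset.card_le_two.trans_lt (by simpa))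
      exact ⟨k, by simpa using hk⟩
    rw [← hmem, Subgroup.mem_comap]
    have hprod (l : Fin d) (w : Equiv.Perm (Fin 4)) :
        ∏ m, sign ((Pi.mulSingle l w : Fin d → Equiv.Perm (Fin 4)) m) = sign w := by
      rw [Finset.prod_eq_single l (fun m _ hm ↦ by simp [hm]) (by simp), Pi.mulSingle_eq_same]
    let x : X := ⟨Pi.mulSingle i u * Pi.mulSingle k u, by
      rw [hX]
      simp only [Pi.mul_apply, map_mul, Finset.prod_mul_distrib, hprod, hu]
      decide⟩
    let y : X := ⟨Pi.mulSingle i v, by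
      rw [hX, hprod, hv]⟩
    have hxy : τ (c i) = ⁅x, y⁆ := by
      apply Subtype.ext
      rw [hτc, ← ht]
      ext l : 1
      rcases eq_or_ne l i with rfl | hli
      · simp [x, y, commutatorElement_def, hki.symm]
      · simp [x, y, commutatorElement_def, hli]
    rw [hxy]
    refine commutatorElement_mem_liftCentralizer (hs (c j)) ?_ ?_
    · apply Subtype.ext
      simp only [Subgroup.coe_mul, hτc]
      exact Commute.mul_left (Pi.mulSingle_commute hij _ _) (Pi.mulSingle_commute hkj _ _)
    · apply Subtype.ext
      simp only [Subgroup.coe_mul, hτc]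
      exact Pi.mulSingle_commute hij _ _
  have hac (a j) : Commute (s a) (s (c j)) := by
    rw [← hmem, Subgroup.eq_top_of_mulSingle_mem fun i ↦ (hmem _ _).2 (hcc i j)]
    exact Subgroup.mem_top a
  refine ⟨s, ?_, fun a b ↦ ?_, fun a ↦ ?_⟩
  · simp only [hs]
    exact hp.comp hτ
  · rw [← hmem, Subgroup.eq_top_of_mulSingle_mem fun i ↦ (hmem _ _).2 (hac b i).symm]
    exact Subgroup.mem_top a
  · have ha : a ^ orderOf t = 1 := by
      ext i : 2
      obtain ⟨k, hk⟩ := Subgroup.mem_zpowers_iff.1 (a i).2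
      rw [Pi.pow_apply, SubmonoidClass.coe_pow, ← hk, ← zpow_natCast, ← zpow_mul, mul_comm, zpow_mul]
      simp
    rw [← QuotientGroup.eq_one_iff, QuotientGroup.mk_pow, hs, ← map_pow, ← map_pow, ha, map_one,
      map_one]


/-- If a subgroup `H` of `PGL(n, F)` (the quotient of `GL(n, F)` by its
center) over a finite field `F` is isomorphic to the alternating group `A_{4*d₁}`,
`d₁ ≥ 1`, then `n ≥ d₁`. -/
theorem pgl_subgroup_iso_alternating_four_mul (F : Type*) [Field F] [Fintype F]
    (n d₁ : ℕ) (hd₁ : 0 < d₁)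
    (H : Subgroup (Matrix.GeneralLinearGroup (Fin n) F ⧸
      Subgroup.center (Matrix.GeneralLinearGroup (Fin n) F)))
    (h : Nonempty (H ≃* alternatingGroup (Fin (4 * d₁)))) :
    d₁ ≤ n := by
  obtain ⟨e⟩ := h
  rcases Nat.lt_or_ge n 2 with hn | hn
  · have : Subsingleton (Fin n) := Fin.subsingleton_iff_le_one.2 (by lia)
    have hcenter : Subgroup.center (GL (Fin n) F) = ⊤ := by
      rw [Subgroup.eq_top_iff']
      intro g
      rw [Subgroup.mem_center_iff]
      intro k
      apply Units.ext
      ext i j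
      have (x : Fin n) : x = i := Subsingleton.elim _ _
      simp [Matrix.mul_apply, this, mul_comm]
    have : Subsingleton (GL (Fin n) F ⧸ Subgroup.center (GL (Fin n) F)) := by
      rw [hcenter]; exact QuotientGroup.subsingleton_quotient_top
    have : Nontrivial (alternatingGroup (Fin (4 * d₁))) :=
      alternatingGroup.nontrivial_of_three_le_card (by simp; lia)
    exact absurd e.symm.injective.subsingleton (not_subsingleton _)
  rcases Nat.lt_or_ge d₁ 3 with hd | hd
  · lia
  have hφ : Function.Injective (H.subtype.comp e.symm.toMonoidHom) :=
    H.subtype_injective.comp e.symm.injective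
  have main {t u v : Equiv.Perm (Fin 4)} (hF : (orderOf t : F) ≠ 0) (ht1 : t ≠ 1)
      (hu : Equiv.Perm.sign u = -1) (hv : Equiv.Perm.sign v = 1) (ht : ⁅u, v⁆ = t) : d₁ ≤ n := by
    obtain ⟨s, hinj, hcomm, hpow⟩ := exists_commuting_lifts hd hφ hu hv ht
    have := Matrix.GeneralLinearGroup.card_le_pow_of_commute hF s hinj hcomm hpow
    rw [Nat.card_fun, Nat.card_zpowers, Nat.card_eq_fintype_card, Fintype.card_fin] at this
    have h2 : 1 < orderOf t := by
      have := orderOf_pos t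
      have := orderOf_eq_one_iff.not.2 ht1
      lia
    exact (Nat.pow_le_pow_iff_right h2).1 this
  by_cases h2 : (2 : F) = 0
  · have h3 : orderOf (c[0, 1, 2] : Equiv.Perm (Fin 4)) = 3 :=
      orderOf_eq_prime (by decide) (by decide)
    refine main (t := c[0, 1, 2]) (u := c[0, 1]) (v := c[0, 1, 2]) ?_ ?_ ?_ ?_ ?_
    · rw [h3]
      intro h
      exact one_ne_zero (α := F) (by push_cast at h; linear_combination h - h2)
    all_goals decide
  · have h2' : orderOf (c[0, 1] * c[2, 3] : Equiv.Perm (Fin 4)) = 2 :=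
      orderOf_eq_prime (by decide) (by decide)
    refine main (t := c[0, 1] * c[2, 3]) (u := c[0, 1]) (v := c[0, 2] * c[1, 3]) ?_ ?_ ?_ ?_ ?_
    · rw [h2']
      exact_mod_cast h2
    all_goals decide
end

section
/- For d ≥ 9, any injective group homomorphism α : A_d → A_{d+2} is conjugate (by an element of S_{d+2}) to the standard embedding; equivalently, α maps every 3-cycle of A_d to a 3-cycle of A_{d+2}. -/
open Equiv Equiv.Perm

theorem alternatingGroup_hom_perm_eq_one {γ Ω : Type*} [Fintype γ] [DecidableEq γ]
    [Fintype Ω] [DecidableEq Ω] (hγ : 5 ≤ Fintype.card γ) (hΩ : Fintype.card Ω < Fintype.card γ)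
    (f : alternatingGroup γ →* Perm Ω) (k : alternatingGroup γ) : f k = 1 := by
  have : IsSimpleGroup (alternatingGroup γ) := alternatingGroup.isSimpleGroup (by simpa using hγ)
  have : Nontrivial γ := Fintype.one_lt_card_iff_nontrivial.mp (by omega)
  rcases (inferInstance : f.ker.Normal).eq_bot_or_eq_top with h | h
  · exfalso
    have hle := Fintype.card_le_of_injective f ((MonoidHom.ker_eq_bot_iff f).mp h)
    have h2 := two_mul_card_alternatingGroup (α := γ)
    rw [Fintype.card_perm] at hle h2
    obtain ⟨m, hm⟩ : ∃ m, Fintype.card γ = m + 1 := ⟨Fintype.card γ - 1, by omega⟩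
    have h3 : (Fintype.card Ω).factorial ≤ m.factorial := Nat.factorial_le (by omega)
    rw [hm, Nat.factorial_succ] at h2
    have := Nat.factorial_pos m
    nlinarith
  · exact f.mem_ker.mp (h ▸ Subgroup.mem_top k)

theorem alternatingGroup_hom_apply_eq_self_of_abelian_orbit {γ Ω : Type*}
    [Fintype γ] [DecidableEq γ] (hγ : 5 ≤ Fintype.card γ) (f : alternatingGroup γ →* Perm Ω)
    (s : Perm Ω) (hs : ∀ k, Commute (f k) s) (z : Ω) (hz : ∀ k, SameCycle s z (f k z))
    (k : alternatingGroup γ) : f k z = z := by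
  let F : Subgroup (alternatingGroup γ) :=
    (MulAction.stabilizer (Perm Ω) z).comap f
  have hF : commutator (alternatingGroup γ) ≤ F := by
    rw [commutator_def, Subgroup.commutator_le]
    intro u _ v _
    obtain ⟨i, hi⟩ := hz u⁻¹
    obtain ⟨j, hj⟩ := hz v⁻¹
    have huv : f (u⁻¹ * v⁻¹) z = f (v⁻¹ * u⁻¹) z := by
      have h1 : f u⁻¹ ((s ^ j) z) = (s ^ j) (f u⁻¹ z) :=
        congrArg (· z) ((hs u⁻¹).zpow_right j).eq
      have h2 : f v⁻¹ ((s ^ i) z) = (s ^ i) (f v⁻¹ z) :=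
        congrArg (· z) ((hs v⁻¹).zpow_right i).eq
      rw [map_mul, map_mul, Perm.mul_apply, Perm.mul_apply, ← hj, ← hi, h1, h2, ← hi, ← hj,
        ← Perm.mul_apply, ← Perm.mul_apply, ← zpow_add, ← zpow_add, add_comm]
    rw [commutatorElement_def,
      show u * v * u⁻¹ * v⁻¹ = (v⁻¹ * u⁻¹)⁻¹ * (u⁻¹ * v⁻¹) by group]
    simp only [F, Subgroup.mem_comap, MulAction.mem_stabilizer_iff, Perm.smul_def]
    rw [map_mul, Perm.mul_apply, huv, map_inv, Perm.inv_eq_iff_eq]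
  have hk : k ∈ F := by
    apply hF
    rw [commutator_alternatingGroup_eq_top (by simpa using hγ)]
    trivial
  exact hk

theorem isThreeCycle_of_centralizes_alternatingGroup {γ Ω : Type*} [Fintype γ] [DecidableEq γ]
    [Fintype Ω] [DecidableEq Ω] (hγ : 5 ≤ Fintype.card γ)
    (hΩ : Fintype.card Ω ≤ Fintype.card γ + 5) (f : alternatingGroup γ →* Perm Ω)
    (hf : Function.Injective f) (s : Perm Ω) (hord : orderOf s = 3)
    (hs : ∀ k, Commute (f k) s) : s.IsThreeCycle := by
  obtain ⟨n, hn⟩ := cycleType_prime_order (σ := s) (by rw [hord]; exact Nat.prime_three)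
  rw [hord] at hn
  rcases Nat.eq_zero_or_pos n with rfl | hn0
  · simpa [IsThreeCycle] using hn
  exfalso
  have hsum : s.support.card = 3 * (n + 1) := by
    rw [← sum_cycleType, hn]; simp; ring
  have hcard : s.cycleFactorsFinset.card = n + 1 := by
    have := congrArg Multiset.card hn
    simpa [cycleType_def] using this
  have hle : s.support.card ≤ Fintype.card Ω := Finset.card_le_univ _
  have hfix : ∀ k z, s z = z → f k z = z := by
    intro k z hz
    have hp (k) (z : Ω) : s (f k z) = f k z ↔ s z = z := by
      have : f k (s z) = s (f k z) := congrArg (· z) (hs k).eq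
      rw [← this, (f k).injective.eq_iff]
    let F : alternatingGroup γ →* Perm {z // s z = z} :=
      MonoidHom.mk' (fun k => (f k).subtypePerm (hp k)) (fun a b => by
        ext z; exact congrArg (· (z : Ω)) (map_mul f a b))
    have hF := alternatingGroup_hom_perm_eq_one hγ (by
      have : Fintype.card {z // s z = z} + s.support.card = Fintype.card Ω := by
        have hsupp : s.support.card = Fintype.card {z // ¬ s z = z} :=
          (Fintype.card_of_subtype _ fun _ => mem_support).symm
        rw [hsupp, Fintype.card_subtype_compl]
        have := Fintype.card_subtype_le (fun z => s z = z)
        omega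
      omega) F k
    exact congrArg (fun g => ((g ⟨z, hz⟩ : {z // s z = z}) : Ω)) hF
  have hmove : ∀ k z, s z ≠ z → f k z = z := by
    intro k z hz
    refine alternatingGroup_hom_apply_eq_self_of_abelian_orbit hγ f s hs z (fun k => ?_) k
    let F : alternatingGroup γ →* Subgroup.centralizer {s} :=
      f.codRestrict _ (fun k => Subgroup.mem_centralizer_singleton_iff.mpr (hs k).eq)
    have hF := alternatingGroup_hom_perm_eq_one hγ (by
      rw [Fintype.card_coe]; omega) ((OnCycleFactors.toPermHom s).comp F) k
    have hc := (OnCycleFactors.mem_ker_toPermHom_iff s (F k)).mp hF (s.cycleOf z)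
      (cycleOf_mem_cycleFactorsFinset_iff.mpr (mem_support.mpr hz))
    have h1 : f k (s.cycleOf z z) = s.cycleOf z (f k z) := congrArg (· z) hc.eq
    by_contra hne
    rw [cycleOf_apply_of_not_sameCycle hne, cycleOf_apply_self] at h1
    exact hz ((f k).injective h1)
  have htriv : ∀ k, f k = 1 := fun k => by
    ext z
    by_cases hz : s z = z
    · exact hfix k z hz
    · exact hmove k z hz
  have : IsSimpleGroup (alternatingGroup γ) := alternatingGroup.isSimpleGroup (by simpa using hγ)
  obtain ⟨k, hk⟩ := exists_ne (1 : alternatingGroup γ)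
  exact hk (hf (by rw [htriv, map_one]))

theorem alternatingGroup_map_isThreeCycle {d : ℕ} (hd : 8 ≤ d)
    (α : alternatingGroup (Fin d) →* alternatingGroup (Fin (d + 2)))
    (hα : Function.Injective α) (x : alternatingGroup (Fin d))
    (hx : (x : Perm (Fin d)).IsThreeCycle) : (α x : Perm (Fin (d + 2))).IsThreeCycle := by
  let A : Finset (Fin d) := (x : Perm (Fin d)).supportᶜ
  have hA : Fintype.card A = d - 3 := by
    rw [Fintype.card_coe, Finset.card_compl, hx.card_support, Fintype.card_fin]
  let f : alternatingGroup A →* Perm (Fin (d + 2)) :=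
    ((alternatingGroup (Fin (d + 2))).subtype.comp α).comp (alternatingGroup.ofSubtype A)
  refine isThreeCycle_of_centralizes_alternatingGroup (γ := A) (by omega)
    (by rw [Fintype.card_fin]; omega) f ?_ _ ?_ ?_
  · exact (Subtype.val_injective.comp hα).comp alternatingGroup.ofSubtype_injective
  · rw [Subgroup.orderOf_coe, orderOf_injective α hα, ← Subgroup.orderOf_coe, hx.orderOf]
  · intro k
    have : Commute (alternatingGroup.ofSubtype A k) x := by
      refine Subtype.ext (Disjoint.commute ?_).eq
      rw [disjoint_iff_disjoint_support]
      refine Finset.disjoint_of_subset_left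
        ((alternatingGroup.mem_range_ofSubtype_iff A _).mp ⟨k, rfl⟩) ?_
      exact disjoint_compl_left
    exact this.map ((alternatingGroup (Fin (d + 2))).subtype.comp α)

theorem exists_cycle_of_isThreeCycle {Ω : Type*} [Fintype Ω] [DecidableEq Ω] {s : Perm Ω}
    (hs : s.IsThreeCycle) : ∃ a b c, a ≠ b ∧ b ≠ c ∧ a ≠ c ∧ s a = b ∧ s b = c ∧ s c = a ∧
      ∀ z, z ≠ a → z ≠ b → z ≠ c → s z = z := by
  obtain ⟨a, ha⟩ := hs.isCycle.nonempty_support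
  have h1 := hs.nodup_iff_mem_support.mpr ha
  have h3 : s (s (s a)) = a := by
    have := pow_orderOf_eq_one s
    rw [hs.orderOf] at this
    simpa [pow_succ, Perm.mul_apply] using congrArg (· a) this
  refine ⟨a, s a, s (s a), by grind, by grind, by grind, rfl, rfl, h3, fun z h h' h'' => ?_⟩
  have := (hs.eq_swap_mul_swap_iff_mem_support (a := a)).mpr ha
  conv_lhs => rw [this]
  rw [Perm.mul_apply, swap_apply_of_ne_of_ne h' h'', swap_apply_of_ne_of_ne h h']

theorem eq_or_eq_or_eq_of_isThreeCycle {Ω : Type*} [Fintype Ω] [DecidableEq Ω] {s : Perm Ω}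
    (hs : s.IsThreeCycle) {x z : Ω} (hx : s x ≠ x) (hz : s z ≠ z) :
    z = x ∨ z = s x ∨ z = s (s x) := by
  have h := hs.support_eq_iff_mem_support.mpr (mem_support.mpr hx)
  have := mem_support.mpr hz
  rw [h] at this
  simpa using this

theorem exists_common_edge {Ω : Type*} [Fintype Ω] [DecidableEq Ω] {s t : Perm Ω}
    (hs : s.IsThreeCycle) (ht : t.IsThreeCycle) (h1 : s * t ≠ 1) (h2 : (s * t) ^ 2 = 1) :
    ∃ x y z w, [x, y, z, w].Nodup ∧ s x = y ∧ s y = z ∧ s z = x ∧ t x = y ∧ t y = w ∧ t w = x := by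
  obtain ⟨a, b, c, hab, hbc, hac, sa, sb, sc, hs'⟩ := exists_cycle_of_isThreeCycle hs
  have hu z : s (t (s (t z))) = z := by simpa [pow_two] using congrArg (· z) h2
  have ht3 z : t (t (t z)) = z := by
    have := pow_orderOf_eq_one t
    rw [ht.orderOf] at this
    simpa [pow_succ, Perm.mul_apply] using congrArg (· z) this
  have htsame z z' (hz : t z ≠ z) (hz' : t z' ≠ z') : z' = z ∨ z' = t z ∨ z' = t (t z) :=
    eq_or_eq_or_eq_of_isThreeCycle ht hz hz'
  have hst : ¬ (t a = c ∧ t b = a ∧ t c = b) := by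
    rintro ⟨ta, tb, tc⟩
    refine h1 (Perm.ext fun z => ?_)
    have h1 := hs' z
    have h2 := htsame a z (ta.trans_ne hac.symm)
    rw [ta, tc] at h2
    rw [Perm.mul_apply, Perm.one_apply]
    by_cases hz : t z = z
    · rw [hz]
      refine h1 ?_ ?_ ?_ <;> rintro rfl <;> grind
    · rcases h2 hz with rfl | rfl | rfl <;> simp_all
  have hinj := t.injective
  have hfix {x y z} (hxy : x ≠ y) (hyz : y ≠ z) (hxz : x ≠ z) (hx : s x = y) (hy : s y = z)
      (hz : s z = x) (hs : ∀ w, w ≠ x → w ≠ y → w ≠ z → s w = w) (tz : t z = z) : t x = y := by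
    by_contra hne
    have tx : t x ≠ x := by
      intro tx
      have := hu z
      grind
    have ty : t y ≠ y := by
      intro ty
      have := hu y
      grind
    have h3 := htsame x y tx ty
    have h4 := hs (t x)
    have h5 := hu x
    have h6 := ht3 x
    have h7 : t x ≠ z := fun h => hxz (hinj (h.trans tz.symm))
    grind
  have key {x y z} (hxy : x ≠ y) (hyz : y ≠ z) (hxz : x ≠ z) (hx : s x = y) (hy : s y = z)
      (hz : s z = x) (hs : ∀ w, w ≠ x → w ≠ y → w ≠ z → s w = w) (h : t x = y) :
      ∃ x y z w, [x, y, z, w].Nodup ∧ s x = y ∧ s y = z ∧ s z = x ∧ t x = y ∧ t y = w ∧ t w = x := by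
    refine ⟨x, y, z, t y, ?_, hx, hy, hz, h, rfl, h ▸ ht3 x⟩
    have h1 := ht3 x
    have h2 := hu x
    have h3 : t y ≠ y := fun h' => hxy (hinj (h.trans h'.symm))
    have h4 : t y ≠ x := by grind
    have h5 : t y ≠ z := by
      intro h
      have := hu x
      grind
    simp only [List.nodup_cons, List.mem_cons, List.not_mem_nil, List.nodup_nil, not_or, or_false]
    exact ⟨⟨hxy, hxz, Ne.symm h4⟩, ⟨hyz, Ne.symm h3⟩, Ne.symm h5, not_false, trivial⟩
  by_cases h1 : t a = b
  · exact key hab hbc hac sa sb sc hs' h1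
  by_cases h2 : t b = c
  · exact key hbc hac.symm hab.symm sb sc sa (by grind) h2
  by_cases h3 : t c = a
  · exact key hac.symm hab hbc.symm sc sa sb (by grind) h3
  exfalso
  have ha : t a ≠ a := fun h => h2 (hfix hbc hac.symm hab.symm sb sc sa (by grind) h)
  have hb : t b ≠ b := fun h => h3 (hfix hac.symm hab hbc.symm sc sa sb (by grind) h)
  have hc : t c ≠ c := fun h => h1 (hfix hab hbc hac sa sb sc hs' h)
  have h4 := htsame a b ha hb
  have h5 := htsame a c ha hc
  have h6 := ht3 a
  grind

theorem common_edge_eq {Ω : Type*} [Fintype Ω] [DecidableEq Ω] {s t u : Perm Ω}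
    (hu : u.IsThreeCycle) {x y z w : Ω} (hxyzw : [x, y, z, w].Nodup)
    (sx : s x = y) (sy : s y = z) (sz : s z = x) (tx : t x = y) (ty : t y = w) (tw : t w = x)
    (hsu : s.IsThreeCycle) (htu : t.IsThreeCycle)
    (h1 : s * u ≠ 1) (h2 : (s * u) ^ 2 = 1) (h3 : t * u ≠ 1) (h4 : (t * u) ^ 2 = 1) :
    u x = y := by
  obtain ⟨a, b, c, d, hn, sa, sb, sc, ua, ub, ud⟩ := exists_common_edge hsu hu h1 h2
  obtain ⟨a', b', c', d', hn', ta, tb, tc, ua', ub', ud'⟩ := exists_common_edge htu hu h3 h4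
  simp only [List.nodup_cons, List.mem_cons, List.not_mem_nil, List.nodup_nil, not_or,
    or_false] at hn hn' hxyzw
  obtain ⟨⟨n1, n2, n3⟩, ⟨n4, n5⟩, n6, -⟩ := hn
  obtain ⟨⟨m1, m2, m3⟩, ⟨m4, m5⟩, m6, -⟩ := hn'
  obtain ⟨⟨k1, k2, k3⟩, ⟨k4, k5⟩, k6, -⟩ := hxyzw
  have e1 := eq_or_eq_or_eq_of_isThreeCycle hsu (x := x) (z := a) (by grind) (by grind)
  have e2 := eq_or_eq_or_eq_of_isThreeCycle htu (x := x) (z := a') (by grind) (by grind)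
  have e3 := eq_or_eq_or_eq_of_isThreeCycle hu (x := a) (z := a') (by grind) (by grind)
  clear hsu htu h1 h2 h3 h4 hu
  rw [sx, sy] at e1
  rw [tx, ty] at e2
  rw [ua, ub] at e3
  rcases e1 with rfl | rfl | rfl
  · grind
  all_goals rcases e2 with rfl | rfl | rfl
  all_goals grind

theorem alternatingGroup_le_of_swap_mul_swap_mem {γ : Type*} [Fintype γ] [DecidableEq γ]
    (H : Subgroup (Perm γ)) {p q : γ} (hpq : p ≠ q)
    (hH : ∀ k, k ≠ p → k ≠ q → swap p q * swap q k ∈ H) : alternatingGroup γ ≤ H := by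
  have rot {a b c : γ} (hab : a ≠ b) (hbc : b ≠ c) (hac : a ≠ c)
      (h : swap a b * swap b c ∈ H) : swap b c * swap c a ∈ H := by
    have : swap b c * swap c a = swap a b * swap b c := by
      ext z; simp only [Perm.mul_apply, swap_apply_def]; grind
    rwa [this]
  have inv {a b c : γ} (h : swap a b * swap b c ∈ H) : swap c b * swap b a ∈ H := by
    have : swap c b * swap b a = (swap a b * swap b c)⁻¹ := by
      rw [mul_inv_rev, swap_inv, swap_inv, swap_comm c b, swap_comm b a]
    rw [this]
    exact H.inv_mem h
  have conj {a b c : γ} (σ : Perm γ) (hσ : σ ∈ H) (h : swap a b * swap b c ∈ H) :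
      swap (σ a) (σ b) * swap (σ b) (σ c) ∈ H := by
    rw [swap_apply_apply, swap_apply_apply]
    have := H.mul_mem (H.mul_mem hσ h) (H.inv_mem hσ)
    convert this using 1
    group
  have hq {i j : γ} (hip : i ≠ p) (hiq : i ≠ q) (hjp : j ≠ p) (hjq : j ≠ q) (hij : i ≠ j) :
      swap q i * swap i j ∈ H := by
    have := conj _ (hH i hip hiq) (hH j hjp hjq)
    convert this using 3 <;> simp only [Perm.mul_apply, swap_apply_def] <;> grind
  have hp {i j : γ} (hip : i ≠ p) (hiq : i ≠ q) (hjp : j ≠ p) (hjq : j ≠ q) (hij : i ≠ j) :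
      swap p i * swap i j ∈ H := by
    have h := conj _ (H.inv_mem (hH j hjp hjq)) (hH i hip hiq)
    have h' : swap j p * swap p i ∈ H := by
      rw [mul_inv_rev, swap_inv, swap_inv] at h
      convert h using 3 <;> simp only [Perm.mul_apply, swap_apply_def] <;> grind
    exact rot hjp hip.symm hij.symm h'
  have hne {i j k : γ} (hip : i ≠ p) (hiq : i ≠ q) (hjp : j ≠ p) (hjq : j ≠ q) (hkp : k ≠ p)
      (hkq : k ≠ q) (hij : i ≠ j) (hjk : j ≠ k) (hik : i ≠ k) : swap i j * swap j k ∈ H := by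
    have := conj _ (hH i hip hiq) (hq hjp hjq hkp hkq hjk)
    convert this using 3 <;> simp only [Perm.mul_apply, swap_apply_def] <;> grind
  have key {a b c : γ} (hab : a ≠ b) (hbc : b ≠ c) (hac : a ≠ c) :
      swap a b * swap b c ∈ H := by
    have hall {u v : γ} (hpu : p ≠ u) (huv : u ≠ v) (hpv : p ≠ v) : swap p u * swap u v ∈ H := by
      by_cases hu : u = q
      · subst hu; exact hH v hpv.symm huv.symm
      · by_cases hv : v = q
        · subst hv
          exact rot hpv.symm hpu (Ne.symm hu) (rot hu hpv.symm hpu.symm (inv (hH u hpu.symm hu)))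
        · exact hp hpu.symm hu hpv.symm hv huv
    have hallq {u v : γ} (hup : u ≠ p) (hvp : v ≠ p) (hqu : q ≠ u) (huv : u ≠ v) (hqv : q ≠ v) :
        swap q u * swap u v ∈ H := hq hup hqu.symm hvp hqv.symm huv
    by_cases h1 : a = p
    · subst h1; exact hall hab hbc hac
    by_cases h2 : b = p
    · subst h2
      exact rot hac.symm hab hbc.symm (rot hbc hac.symm hab.symm (hall hbc hac.symm hab.symm))
    by_cases h3 : c = p
    · subst h3; exact rot hac.symm hab hbc.symm (hall hac.symm hab hbc.symm)
    by_cases h4 : a = q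
    · subst h4; exact hallq h2 h3 hab hbc hac
    by_cases h5 : b = q
    · subst h5
      exact rot hac.symm hab hbc.symm
        (rot hbc hac.symm hab.symm (hallq h3 h1 hbc hac.symm hab.symm))
    by_cases h6 : c = q
    · subst h6; exact rot hac.symm hab hbc.symm (hallq h1 h2 hac.symm hab hbc.symm)
    exact hne h1 h4 h2 h5 h3 h6 hab hbc hac
  rw [← closure_three_cycles_eq_alternating, Subgroup.closure_le]
  intro σ hσ
  obtain ⟨a, ha⟩ := hσ.isCycle.nonempty_support
  rw [SetLike.mem_coe, hσ.eq_swap_mul_swap_iff_mem_support.mpr ha]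
  have := hσ.nodup_iff_mem_support.mpr ha
  simp only [List.nodup_cons, List.mem_cons, List.not_mem_nil, List.nodup_nil, not_or,
    or_false] at this
  obtain ⟨⟨n1, n2⟩, n3, -⟩ := this
  exact key n1 n3 n2

theorem alternatingGroup_hom_conj_of_isThreeCycle {d : ℕ} (hd : 4 ≤ d)
    (α : alternatingGroup (Fin d) →* alternatingGroup (Fin (d + 2)))
    (hα : Function.Injective α)
    (h3 : ∀ x : alternatingGroup (Fin d), (x : Perm (Fin d)).IsThreeCycle →
      (α x : Perm (Fin (d + 2))).IsThreeCycle) (ι : Fin d ↪ Fin (d + 2)) :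
    ∃ g : Perm (Fin (d + 2)), ∀ x : alternatingGroup (Fin d),
      (α x : Perm (Fin (d + 2))) = g * (x : Perm (Fin d)).viaEmbedding ι * g⁻¹ := by
  let p : Fin d := ⟨0, by omega⟩
  let q : Fin d := ⟨1, by omega⟩
  have hpq : p ≠ q := by simp [p, q]
  have hmem k (hk : k ≠ q) : swap p q * swap q k ∈ alternatingGroup (Fin d) := by
    rw [mem_alternatingGroup, Perm.sign_mul, sign_swap hpq, sign_swap hk.symm]; rfl
  let T (k : Fin d) : alternatingGroup (Fin d) :=
    if hk : k = q then 1 else ⟨swap p q * swap q k, hmem k hk⟩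
  have hT k (hk : k ≠ q) : (T k : Perm (Fin d)) = swap p q * swap q k := by simp [T, hk]
  let s (k : Fin d) : Perm (Fin (d + 2)) := α (T k)
  have hs k (hkp : k ≠ p) (hkq : k ≠ q) : (s k).IsThreeCycle := by
    apply h3
    rw [hT k hkq, swap_comm p q]
    exact isThreeCycle_swap_mul_swap_same hpq.symm hkq.symm hkp.symm
  have hone k l (hkp : k ≠ p) (hkq : k ≠ q) (hlp : l ≠ p) (hlq : l ≠ q) (hkl : k ≠ l) :
      s k * s l ≠ 1 := by
    intro h
    have h' : T k * T l = 1 := hα (Subtype.ext (by simpa using h))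
    have h'' := congrArg (fun g : alternatingGroup (Fin d) => (g : Perm (Fin d)) p) h'
    simp only [Subgroup.coe_mul, hT k hkq, hT l hlq, Perm.mul_apply, Subgroup.coe_one,
      Perm.one_apply, swap_apply_def] at h''
    grind
  have hsq k l (hkp : k ≠ p) (hkq : k ≠ q) (hlp : l ≠ p) (hlq : l ≠ q) (hkl : k ≠ l) :
      (s k * s l) ^ 2 = 1 := by
    have h : (T k * T l) ^ 2 = 1 := by
      ext z
      simp only [pow_two, Subgroup.coe_mul, hT k hkq, hT l hlq, Perm.mul_apply, Subgroup.coe_one,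
        Perm.one_apply, swap_apply_def]
      grind
    have := congrArg (fun g => (α g : Perm (Fin (d + 2)))) h
    simpa using this
  obtain ⟨x, y, hxy, hx⟩ : ∃ x y, x ≠ y ∧ ∀ k, k ≠ p → k ≠ q → s k x = y := by
    let k₂ : Fin d := ⟨2, by omega⟩
    let k₃ : Fin d := ⟨3, by omega⟩
    have h2p : k₂ ≠ p := by simp [k₂, p]
    have h2q : k₂ ≠ q := by simp [k₂, q]
    have h3p : k₃ ≠ p := by simp [k₃, p]
    have h3q : k₃ ≠ q := by simp [k₃, q]
    have h23 : k₂ ≠ k₃ := by simp [k₂, k₃]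
    obtain ⟨x, y, z, w, hn, sx, sy, sz, tx, ty, tw⟩ := exists_common_edge (hs k₂ h2p h2q)
      (hs k₃ h3p h3q) (hone _ _ h2p h2q h3p h3q h23) (hsq _ _ h2p h2q h3p h3q h23)
    refine ⟨x, y, by grind, fun k hkp hkq => ?_⟩
    by_cases hk2 : k = k₂
    · rw [hk2, sx]
    by_cases hk3 : k = k₃
    · rw [hk3, tx]
    exact common_edge_eq (hs k hkp hkq) hn sx sy sz tx ty tw (hs _ h2p h2q) (hs _ h3p h3q)
      (hone _ _ h2p h2q hkp hkq (Ne.symm hk2)) (hsq _ _ h2p h2q hkp hkq (Ne.symm hk2))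
      (hone _ _ h3p h3q hkp hkq (Ne.symm hk3)) (hsq _ _ h3p h3q hkp hkq (Ne.symm hk3))
  have hc k (hkp : k ≠ p) (hkq : k ≠ q) : s k (s k y) = x := by
    have := pow_orderOf_eq_one (s k)
    rw [(hs k hkp hkq).orderOf] at this
    simpa [pow_succ, Perm.mul_apply, hx k hkp hkq] using congrArg (· x) this
  have hcx k (hkp : k ≠ p) (hkq : k ≠ q) : s k y ≠ x := by
    intro h
    have h1 := hc k hkp hkq
    rw [h, hx k hkp hkq] at h1
    exact hxy h1.symm
  have hcy k (hkp : k ≠ p) (hkq : k ≠ q) : s k y ≠ y := fun h =>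
    hxy ((s k).injective ((hx k hkp hkq).trans h.symm))
  have hfix k (hkp : k ≠ p) (hkq : k ≠ q) z (hzx : z ≠ x) (hzy : z ≠ y) (hzk : z ≠ s k y) :
      s k z = z := by
    by_contra hz
    have h := eq_or_eq_or_eq_of_isThreeCycle (hs k hkp hkq) (x := x)
      (by rw [hx k hkp hkq]; exact hxy.symm) hz
    rw [hx k hkp hkq] at h
    tauto
  let f (m : Fin d) : Fin (d + 2) := if m = p then x else if m = q then y else s m y
  have fp : f p = x := by simp [f]
  have fq : f q = y := by simp [f, hpq.symm]
  have fk k (hkp : k ≠ p) (hkq : k ≠ q) : f k = s k y := by simp [f, hkp, hkq]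
  have hinj k l (hkp : k ≠ p) (hkq : k ≠ q) (hlp : l ≠ p) (hlq : l ≠ q) (h : s k y = s l y) :
      k = l := by
    by_contra hkl
    have h1 : s k (s l (s k (s l x))) = x := by
      simpa [pow_two] using congrArg (· x) (hsq k l hkp hkq hlp hlq hkl)
    rw [hx l hlp hlq, h, hc l hlp hlq, hx k hkp hkq] at h1
    exact hxy h1.symm
  have hf : Function.Injective f := by
    intro k l hkl
    clear_value f s
    have hk := fk k
    have hl := fk l
    have hkx := hcx k
    have hky := hcy k
    have hlx := hcx l
    have hly := hcy l
    have hkl' := hinj k l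
    clear hs hone hsq hx hc hcx hcy hfix hinj fk
    by_cases hkp : k = p <;> by_cases hkq : k = q <;> by_cases hlp : l = p <;>
      by_cases hlq : l = q <;> grind
  obtain ⟨g, hg⟩ := (Perm.isMultiplyPretransitive (Fin (d + 2)) d).exists_smul_eq ι ⟨f, hf⟩
  replace hg m : g (ι m) = f m := congrArg (fun e : Fin d ↪ Fin (d + 2) => e m) hg
  refine ⟨g, ?_⟩
  let φ : alternatingGroup (Fin d) →* Perm (Fin (d + 2)) :=
    (alternatingGroup (Fin (d + 2))).subtype.comp α
  let ψ : alternatingGroup (Fin d) →* Perm (Fin (d + 2)) :=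
    ((MulAut.conj g).toMonoidHom.comp (viaEmbeddingHom ι)).comp (alternatingGroup (Fin d)).subtype
  have hle := alternatingGroup_le_of_swap_mul_swap_mem
    ((φ.eqLocus ψ).map (alternatingGroup (Fin d)).subtype) hpq (fun k hkp hkq => by
      refine ⟨T k, ?_, hT k hkq⟩
      change s k = g * (T k : Perm (Fin d)).viaEmbedding ι * g⁻¹
      rw [eq_mul_inv_iff_mul_eq, hT k hkq]
      ext1 w
      rw [Perm.mul_apply, Perm.mul_apply]
      by_cases hw : w ∈ Set.range ι
      · obtain ⟨m, rfl⟩ := hw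
        rw [viaEmbedding_apply, hg, hg]
        by_cases hmp : m = p
        · rw [hmp, Perm.mul_apply, swap_apply_of_ne_of_ne hpq hkp.symm, swap_apply_left, fp, fq,
            hx k hkp hkq]
        by_cases hmq : m = q
        · rw [hmq, Perm.mul_apply, swap_apply_left, swap_apply_of_ne_of_ne hkp hkq, fq,
            fk k hkp hkq]
        by_cases hmk : m = k
        · rw [hmk, Perm.mul_apply, swap_apply_right, swap_apply_right, fk k hkp hkq, fp,
            hc k hkp hkq]
        rw [Perm.mul_apply, swap_apply_of_ne_of_ne hmq hmk, swap_apply_of_ne_of_ne hmp hmq]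
        refine hfix k hkp hkq _ ?_ ?_ ?_
        · rw [← fp]; exact hf.ne hmp
        · rw [← fq]; exact hf.ne hmq
        · rw [← fk k hkp hkq]; exact hf.ne hmk
      · have hw' m : g w ≠ f m := by
          rw [← hg]
          exact g.injective.ne fun h => hw ⟨m, h.symm⟩
        rw [viaEmbedding_apply_of_notMem _ _ _ hw]
        refine hfix k hkp hkq _ ?_ ?_ ?_
        · rw [← fp]; exact hw' p
        · rw [← fq]; exact hw' q
        · rw [← fk k hkp hkq]; exact hw' k)
  intro u
  obtain ⟨v, hv, hvu⟩ := hle u.2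
  obtain rfl : v = u := Subtype.ext hvu
  exact hv


/-- For `d ≥ 9`, every injective homomorphism `α : A_d → A_{d+2}` is
conjugate (by an element of `S_{d+2}`) to the standard embedding (extension of
permutations of `{1,…,d}` by the identity on the two extra letters); equivalently,
`α` sends every 3-cycle to a 3-cycle. -/
theorem alternating_embedding_conj_standard (d : ℕ) (hd : 9 ≤ d)
    (α : alternatingGroup (Fin d) →* alternatingGroup (Fin (d + 2)))
    (hα : Function.Injective α) :
    (∃ g : Equiv.Perm (Fin (d + 2)),
      ∀ x : alternatingGroup (Fin d),
        ((α x : Equiv.Perm (Fin (d + 2)))) =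
          g * (x : Equiv.Perm (Fin d)).viaEmbedding
            (Fin.castLEEmb (by omega : d ≤ d + 2)) * g⁻¹) ∧
    (∀ x : alternatingGroup (Fin d), (x : Equiv.Perm (Fin d)).IsThreeCycle →
      ((α x : Equiv.Perm (Fin (d + 2)))).IsThreeCycle) := by
  have h3 x := alternatingGroup_map_isThreeCycle (by omega) α hα x
  exact ⟨alternatingGroup_hom_conj_of_isThreeCycle (by omega) α hα h3 _, h3⟩
end

section
/- Let G be a finite group containing S_d as a subgroup with d ≥ 7, and suppose S_d is a normal subgroup of G such that no proper subgroup of G strictly containing S_d exists other than S_d itself (minimality). Then G is isomorphic to the direct product S_d × Z/pZ for some prime p, where the factor Z/pZ is generated by an element commuting with all of S_d. -/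
namespace Equiv.Perm

variable {α : Type*} [DecidableEq α]

/-- A transposition that does not commute with `swap a b` meets `{a, b}` in exactly one point. -/
lemma IsSwap.exists_eq_swap_of_not_commute {a b : α} {t : Perm α} (ht : t.IsSwap)
    (h : ¬ Commute (swap a b) t) :
    ∃ c, c ≠ a ∧ c ≠ b ∧ (t = swap a c ∨ t = swap b c) := by
  obtain ⟨u, v, huv, rfl⟩ := ht
  have hab : a ≠ b := by
    rintro rfl
    exact h (by rw [swap_self]; exact Commute.one_left _)
  by_cases hua : u = a
  · subst hua
    refine ⟨v, huv.symm, ?_, Or.inl rfl⟩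
    rintro rfl
    exact h (Commute.refl _)
  by_cases hub : u = b
  · subst hub
    refine ⟨v, ?_, huv.symm, Or.inr rfl⟩
    rintro rfl
    exact h (by rw [swap_comm])
  by_cases hva : v = a
  · subst hva
    exact ⟨u, hua, hub, Or.inl (swap_comm _ _)⟩
  by_cases hvb : v = b
  · subst hvb
    exact ⟨u, hua, hub, Or.inr (swap_comm _ _)⟩
  refine absurd (Disjoint.commute fun x => ?_) h
  by_cases hxu : x = u
  · subst hxu
    exact Or.inl (swap_apply_of_ne_of_ne hua hub)
  by_cases hxv : x = v
  · subst hxv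
    exact Or.inl (swap_apply_of_ne_of_ne hva hvb)
  exact Or.inr (swap_apply_of_ne_of_ne hxu hxv)

lemma IsSwap.sq_eq_one {s : Perm α} (hs : s.IsSwap) : s ^ 2 = 1 := by
  obtain ⟨a, b, -, rfl⟩ := hs
  rw [sq, swap_mul_self]

lemma IsSwap.ne_one {s : Perm α} (hs : s.IsSwap) : s ≠ 1 := by
  obtain ⟨a, b, hab, rfl⟩ := hs
  exact fun h => hab (swap_eq_one_iff.1 h)

lemma IsSwap.mul_pow_six_eq_one [Fintype α] {s t : Perm α} (hs : s.IsSwap) (ht : t.IsSwap) :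
    (s * t) ^ 6 = 1 := by
  have key : ∀ a b c : α, a ≠ b → a ≠ c → b ≠ c → (swap a b * swap a c) ^ 6 = 1 := by
    intro a b c hab hac hbc
    have h3 := (isThreeCycle_swap_mul_swap_same hab hac hbc).orderOf
    exact orderOf_dvd_iff_pow_eq_one.1 (h3 ▸ by norm_num)
  by_cases h : Commute s t
  · rw [h.mul_pow, show 6 = 2 * 3 from rfl, pow_mul, pow_mul, hs.sq_eq_one, ht.sq_eq_one]
    simp
  · obtain ⟨a, b, hab, rfl⟩ := hs
    obtain ⟨c, hca, hcb, rfl | rfl⟩ := ht.exists_eq_swap_of_not_commute h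
    · exact key a b c hab hca.symm hcb.symm
    · rw [swap_comm a b]
      exact key b a c hab.symm hcb.symm hca.symm

lemma IsSwap.conj {s : Perm α} (hs : s.IsSwap) (π : Perm α) : (π * s * π⁻¹).IsSwap := by
  obtain ⟨a, b, hab, rfl⟩ := hs
  exact ⟨π a, π b, π.injective.ne hab, (swap_apply_apply π a b).symm⟩

/-- An involution with a fixed point and two disjoint transpositions has a conjugate such that the
product of the two contains a 5-cycle. -/
lemma exists_conj_mul_pow_six_ne_one_of_fixed {σ : Perm α} (hσ : ∀ x, σ (σ x) = x)
    {a c e : α} (ha : σ a ≠ a) (hc : σ c ≠ c) (hca : c ≠ a) (hcb : c ≠ σ a) (he : σ e = e) :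
    ∃ π : Perm α, (σ * (π * σ * π⁻¹)) ^ 6 ≠ 1 := by
  obtain ⟨b, hb⟩ : ∃ b, σ a = b := ⟨_, rfl⟩
  obtain ⟨d, hd⟩ : ∃ d, σ c = d := ⟨_, rfl⟩
  have hb' : σ b = a := by rw [← hb, hσ]
  have hd' : σ d = c := by rw [← hd, hσ]
  have hnd : [a, b, c, d, e].Nodup := by
    simp only [List.nodup_cons, List.mem_cons, List.not_mem_nil, or_false, not_or]
    and_intros <;> grind
  have hp := fun n hn => List.formPerm_apply_lt_getElem _ hnd n hn
  have h0 : List.formPerm [a, b, c, d, e] a = b := hp 0 (by simp)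
  have h1 : List.formPerm [a, b, c, d, e] b = c := hp 1 (by simp)
  have h2 : List.formPerm [a, b, c, d, e] c = d := hp 2 (by simp)
  have h3 : List.formPerm [a, b, c, d, e] d = e := hp 3 (by simp)
  have h4 : List.formPerm [a, b, c, d, e] e = a := by simp
  generalize List.formPerm [a, b, c, d, e] = π at *
  refine ⟨π, fun h => ha ?_⟩
  have i0 := inv_eq_iff_eq.2 h0.symm
  have i1 := inv_eq_iff_eq.2 h1.symm
  have i2 := inv_eq_iff_eq.2 h2.symm
  have i3 := inv_eq_iff_eq.2 h3.symm
  have i4 := inv_eq_iff_eq.2 h4.symm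
  have h' : ((σ * (π * σ * π⁻¹)) ^ 6) a = a := by rw [h, one_apply]
  clear h
  simp only [pow_succ, pow_zero, one_mul, mul_apply, *] at h'
  rw [hb, h']

/-- An involution with four disjoint transpositions has a conjugate such that the product of the
two contains a 4-cycle. -/
lemma exists_conj_mul_pow_six_ne_one_of_four {σ : Perm α} (hσ : ∀ x, σ (σ x) = x)
    {a c e g : α} (ha : σ a ≠ a) (hc : σ c ≠ c) (he : σ e ≠ e) (hg : σ g ≠ g)
    (hca : c ≠ a) (hcb : c ≠ σ a) (hea : e ≠ a) (heb : e ≠ σ a) (hec : e ≠ c) (hed : e ≠ σ c)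
    (hga : g ≠ a) (hgb : g ≠ σ a) (hgc : g ≠ c) (hgd : g ≠ σ c) (hge : g ≠ e) (hgf : g ≠ σ e) :
    ∃ π : Perm α, (σ * (π * σ * π⁻¹)) ^ 6 ≠ 1 := by
  obtain ⟨b, hb⟩ : ∃ b, σ a = b := ⟨_, rfl⟩
  obtain ⟨d, hd⟩ : ∃ d, σ c = d := ⟨_, rfl⟩
  obtain ⟨f, hf⟩ : ∃ f, σ e = f := ⟨_, rfl⟩
  obtain ⟨k, hk⟩ : ∃ k, σ g = k := ⟨_, rfl⟩
  have hb' : σ b = a := by rw [← hb, hσ]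
  have hd' : σ d = c := by rw [← hd, hσ]
  have hf' : σ f = e := by rw [← hf, hσ]
  have hk' : σ k = g := by rw [← hk, hσ]
  have hnd : [a, b, c, d, e, f, g, k].Nodup := by
    simp only [List.nodup_cons, List.mem_cons, List.not_mem_nil, or_false, not_or]
    and_intros <;> grind
  have hp := fun n hn => List.formPerm_apply_lt_getElem _ hnd n hn
  have h0 : List.formPerm [a, b, c, d, e, f, g, k] a = b := hp 0 (by simp)
  have h1 : List.formPerm [a, b, c, d, e, f, g, k] b = c := hp 1 (by simp)
  have h2 : List.formPerm [a, b, c, d, e, f, g, k] c = d := hp 2 (by simp)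
  have h3 : List.formPerm [a, b, c, d, e, f, g, k] d = e := hp 3 (by simp)
  have h4 : List.formPerm [a, b, c, d, e, f, g, k] e = f := hp 4 (by simp)
  have h5 : List.formPerm [a, b, c, d, e, f, g, k] f = g := hp 5 (by simp)
  have h6 : List.formPerm [a, b, c, d, e, f, g, k] g = k := hp 6 (by simp)
  have h7 : List.formPerm [a, b, c, d, e, f, g, k] k = a := by simp
  generalize List.formPerm [a, b, c, d, e, f, g, k] = π at *
  refine ⟨π, fun h => hea ?_⟩
  have i0 := inv_eq_iff_eq.2 h0.symm
  have i1 := inv_eq_iff_eq.2 h1.symm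
  have i2 := inv_eq_iff_eq.2 h2.symm
  have i3 := inv_eq_iff_eq.2 h3.symm
  have i4 := inv_eq_iff_eq.2 h4.symm
  have i5 := inv_eq_iff_eq.2 h5.symm
  have i6 := inv_eq_iff_eq.2 h6.symm
  have i7 := inv_eq_iff_eq.2 h7.symm
  have h' : ((σ * (π * σ * π⁻¹)) ^ 6) a = a := by rw [h, one_apply]
  clear h
  simp only [pow_succ, pow_zero, one_mul, mul_apply, *] at h'

/-- On at least seven points, transpositions are the nontrivial involutions whose product with
any of their conjugates has order dividing six. -/
lemma isSwap_iff_forall_conj_pow_six [Fintype α] (hα : 7 ≤ Fintype.card α) (σ : Perm α) :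
    σ.IsSwap ↔ σ ^ 2 = 1 ∧ σ ≠ 1 ∧ ∀ π : Perm α, (σ * (π * σ * π⁻¹)) ^ 6 = 1 := by
  refine ⟨fun h => ⟨h.sq_eq_one, h.ne_one, fun π => h.mul_pow_six_eq_one (h.conj π)⟩, ?_⟩
  rintro ⟨h2, h1, h6⟩
  have hσ : ∀ x, σ (σ x) = x := fun x => by rw [← mul_apply, ← sq, h2, one_apply]
  have hex : ∀ s : Finset α, s.card < 7 → ∃ x, x ∉ s := fun s hs => by
    by_contra! h
    rw [Finset.eq_univ_of_forall h, Finset.card_univ] at hs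
    omega
  obtain ⟨a, ha⟩ : ∃ a, σ a ≠ a := by
    by_contra! h
    exact h1 (Perm.ext h)
  by_contra hs
  obtain ⟨c, hc, hca, hcb⟩ : ∃ c, σ c ≠ c ∧ c ≠ a ∧ c ≠ σ a := by
    by_contra! h
    refine hs ⟨a, σ a, ha.symm, Perm.ext fun x => ?_⟩
    by_cases hxa : x = a
    · rw [hxa, swap_apply_left]
    by_cases hxb : x = σ a
    · rw [hxb, swap_apply_right, hσ]
    rw [swap_apply_of_ne_of_ne hxa hxb]
    by_contra hx
    exact hxb (h x hx hxa)
  by_cases hfix : ∃ e, σ e = e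
  · obtain ⟨e, he⟩ := hfix
    obtain ⟨π, hπ⟩ := exists_conj_mul_pow_six_ne_one_of_fixed hσ ha hc hca hcb he
    exact hπ (h6 π)
  · push Not at hfix
    obtain ⟨e, he⟩ := hex {a, σ a, c, σ c} (Finset.card_le_four.trans_lt (by norm_num))
    obtain ⟨g, hg⟩ := hex {a, σ a, c, σ c, e, σ e} (Finset.card_le_six.trans_lt (by norm_num))
    simp only [Finset.mem_insert, Finset.mem_singleton, not_or] at he hg
    obtain ⟨e1, e2, e3, e4⟩ := he
    obtain ⟨g1, g2, g3, g4, g5, g6⟩ := hg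
    obtain ⟨π, hπ⟩ := exists_conj_mul_pow_six_ne_one_of_four hσ ha hc (hfix e) (hfix g) hca hcb
      e1 e2 e3 e4 g1 g2 g3 g4 g5 g6
    exact hπ (h6 π)

/-- The center of a symmetric group on at least three points is trivial. -/
lemma eq_one_of_forall_commute [Fintype α] (hα : 2 < Fintype.card α) {n : Perm α}
    (hn : ∀ m, Commute m n) : n = 1 := by
  ext x
  by_contra hx
  rw [one_apply] at hx
  obtain ⟨z, hz⟩ : ∃ z, z ∉ ({x, n x} : Finset α) := by
    by_contra! h
    have h2 : ({x, n x} : Finset α).card ≤ 2 := Finset.card_le_two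
    rw [Finset.eq_univ_of_forall h, Finset.card_univ] at h2
    omega
  simp only [Finset.mem_insert, Finset.mem_singleton, not_or] at hz
  have := congrArg (· x) (hn (swap (n x) z)).eq
  simp only [mul_apply, swap_apply_left, swap_apply_of_ne_of_ne (Ne.symm hx) (Ne.symm hz.1)] at this
  exact hz.2 this

lemma not_commute_swap_swap {x i j : α} (hi : i ≠ x) (hj : j ≠ x) (hij : i ≠ j) :
    ¬ Commute (swap x i) (swap x j) := fun h => by
  have := congrArg (· x) h.eq
  simp only [mul_apply, swap_apply_left, swap_apply_of_ne_of_ne hi hij,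
    swap_apply_of_ne_of_ne hj hij.symm] at this
  exact hij this.symm

/-- An automorphism of a symmetric group that preserves transpositions is inner. -/
theorem exists_conj_of_map_isSwap [Fintype α] (hα : 2 < Fintype.card α)
    (f : Perm α ≃* Perm α) (hf : ∀ s : Perm α, s.IsSwap → (f s).IsSwap) :
    ∃ π : Perm α, ∀ s, f s = π * s * π⁻¹ := by
  obtain ⟨x, y, z, hxy, hxz, hyz⟩ := Fintype.two_lt_card_iff.1 hα
  have hnc : ∀ i j, i ≠ x → j ≠ x → i ≠ j → ¬ Commute (f (swap x i)) (f (swap x j)) := by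
    intro i j hi hj hij h
    exact not_commute_swap_swap hi hj hij ((commute_map_iff f.injective).1 h)
  have hsw : ∀ i, i ≠ x → (f (swap x i)).IsSwap := fun i hi => hf _ ⟨x, i, hi.symm, rfl⟩
  obtain ⟨a, b, c, hab, hca, hcb, hy, hz⟩ : ∃ a b c, a ≠ b ∧ c ≠ a ∧ c ≠ b ∧
      f (swap x y) = swap a b ∧ f (swap x z) = swap a c := by
    obtain ⟨a, b, hab, hy⟩ := hsw y hxy.symm
    have h := hnc y z hxy.symm hxz.symm hyz
    rw [hy] at h
    obtain ⟨c, hca, hcb, hz | hz⟩ := (hsw z hxz.symm).exists_eq_swap_of_not_commute h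
    · exact ⟨a, b, c, hab, hca, hcb, hy, hz⟩
    · exact ⟨b, a, c, hab.symm, hcb, hca, by rw [hy, swap_comm], hz⟩
  have hstar : ∀ i, ∃ v, f (swap x i) = swap a v ∧ (i = x → v = a) := by
    intro i
    by_cases hix : i = x
    · exact ⟨a, by rw [hix, swap_self, swap_self]; exact map_one f, fun _ => rfl⟩
    suffices h : ∃ v, f (swap x i) = swap a v by
      obtain ⟨v, hv⟩ := h
      exact ⟨v, hv, fun h => absurd h hix⟩
    by_cases hiy : i = y
    · exact ⟨b, hiy ▸ hy⟩
    by_cases hiz : i = z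
    · exact ⟨c, hiz ▸ hz⟩
    have h1 := hnc y i hxy.symm hix (Ne.symm hiy)
    have h2 := hnc z i hxz.symm hix (Ne.symm hiz)
    rw [hy] at h1
    rw [hz] at h2
    obtain ⟨v, hva, hvb, hv | hv⟩ := (hsw i hix).exists_eq_swap_of_not_commute h1
    · exact ⟨v, hv⟩
    exfalso
    obtain ⟨w, hwa, hwc, hw | hw⟩ := (hsw i hix).exists_eq_swap_of_not_commute h2
    · rw [hv] at hw
      have := congrArg (· a) hw
      simp only [swap_apply_left, swap_apply_of_ne_of_ne hab hva.symm] at this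
      exact hwa this.symm
    · have hvc : v = c := by
        by_contra hvc
        rw [hv] at hw
        have := congrArg (· c) hw
        simp only [swap_apply_left, swap_apply_of_ne_of_ne hcb (Ne.symm hvc)] at this
        exact hwc this.symm
      have h3 : f (swap x i) = f (swap y z) := by
        rw [hv, hvc, ← swap_mul_swap_mul_swap hca hcb, ← swap_mul_swap_mul_swap hxz.symm hyz.symm,
          map_mul, map_mul, swap_comm z x, hy, hz, swap_comm c a]
      have := congrArg (· x) (f.injective h3)
      simp only [swap_apply_left, swap_apply_of_ne_of_ne hxy hxz] at this
      exact hix this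
  choose v hv hvx using hstar
  have hinj : Function.Injective v := fun i j hij => by
    have h : swap x i = swap x j := f.injective (by rw [hv, hv, hij])
    simpa using congrArg (· x) h
  let π : Perm α := Equiv.ofBijective v (Finite.injective_iff_bijective.1 hinj)
  have hπx : π x = a := hvx x rfl
  have hstar : ∀ i, f (swap x i) = π * swap x i * π⁻¹ := fun i => by
    rw [← swap_apply_apply, hπx]
    exact hv i
  refine ⟨π, fun s => ?_⟩
  suffices h : f.toMonoidHom = (MulAut.conj π).toMonoidHom from DFunLike.congr_fun h s
  refine MonoidHom.eq_of_eqOn_dense (closure_isSwap (α := α)) ?_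
  rintro _ ⟨i, j, hij, rfl⟩
  change f (swap i j) = π * swap i j * π⁻¹
  by_cases hi : i = x
  · rw [hi, hstar]
  by_cases hj : j = x
  · rw [hj, swap_comm, hstar]
  have : swap i j = swap x i * swap x j * swap x i := by
    rw [swap_comm x j, swap_mul_swap_mul_swap hj (Ne.symm hij)]
  rw [this, map_mul, map_mul, hstar, hstar]
  group

/-- Every automorphism of a symmetric group on at least seven points is inner. -/
theorem exists_conj_of_mulEquiv [Fintype α] (hα : 7 ≤ Fintype.card α)
    (f : Perm α ≃* Perm α) : ∃ π : Perm α, ∀ s, f s = π * s * π⁻¹ := by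
  refine exists_conj_of_map_isSwap (by omega) f fun s hs => ?_
  rw [isSwap_iff_forall_conj_pow_six hα] at hs ⊢
  obtain ⟨h2, h1, h6⟩ := hs
  refine ⟨by rw [← map_pow, h2, map_one], by simpa using h1, fun π => ?_⟩
  obtain ⟨ρ, rfl⟩ := f.surjective π
  rw [← map_inv, ← map_mul, ← map_mul, ← map_mul, ← map_pow, h6, map_one]

end Equiv.Perm

/-- If every automorphism of `N` is inner, then a group containing `N` as a normal subgroup is
the product of `N` and its centralizer. -/
lemma exists_mul_of_normal_range_of_inner {N G : Type*} [Group N] [Group G] (φ : N →* G)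
    (hφ : Function.Injective φ) (hnorm : φ.range.Normal)
    (hinner : ∀ f : N ≃* N, ∃ n : N, ∀ s, f s = n * s * n⁻¹) (g : G) :
    ∃ n : N, ∃ c ∈ Subgroup.centralizer (φ.range : Set G), g = φ n * c := by
  let e : N ≃* φ.range := φ.ofInjective hφ
  let f : N ≃* N := (e.trans (MulAut.conjNormal g)).trans e.symm
  obtain ⟨n, hn⟩ := hinner f
  have hf : ∀ s, φ (f s) = g * φ s * g⁻¹ := fun s => by
    have : e (f s) = MulAut.conjNormal g (e s) := e.apply_symm_apply _
    exact congrArg Subtype.val this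
  refine ⟨n, (φ n)⁻¹ * g, ?_, by group⟩
  rw [Subgroup.mem_centralizer_iff]
  rintro _ ⟨s, rfl⟩
  have h := hf s
  rw [hn, map_mul, map_mul, map_inv] at h
  calc φ s * ((φ n)⁻¹ * g) = (φ n)⁻¹ * (φ n * φ s * (φ n)⁻¹) * g := by group
    _ = (φ n)⁻¹ * g * φ s := by rw [h]; group

/-- Let `G` be a finite group containing `S_d` (given by an injective
homomorphism `φ`) with `d ≥ 7`, suppose `S_d` is a proper normal subgroup of `G`, and
`G` is a minimal expansion of `S_d` (no subgroup strictly between `S_d` and `G`). Then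
`G ≅ S_d × ℤ/pℤ` for some prime `p`, with the cyclic factor generated by an element
commuting with all of `S_d`. -/
theorem minimal_expansion_of_normal_symm (d : ℕ) (hd : 7 ≤ d)
    (G : Type*) [Group G] [Finite G]
    (φ : Equiv.Perm (Fin d) →* G) (hφ : Function.Injective φ)
    (hnorm : φ.range.Normal) (hne : φ.range ≠ ⊤)
    (hmin : ∀ G₁ : Subgroup G, φ.range ≤ G₁ → G₁ = φ.range ∨ G₁ = ⊤) :
    ∃ p : ℕ, p.Prime ∧ ∃ g : G, orderOf g = p ∧
      (∀ s ∈ φ.range, Commute g s) ∧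
      Nonempty (G ≃* Equiv.Perm (Fin d) × Multiplicative (ZMod p)) := by
  have hsplit := exists_mul_of_normal_range_of_inner φ hφ hnorm
    (Equiv.Perm.exists_conj_of_mulEquiv (by simpa using hd))
  set C := Subgroup.centralizer (φ.range : Set G)
  have hcomm : ∀ c ∈ C, ∀ n, φ n * c = c * φ n := fun c hc n =>
    Subgroup.mem_centralizer_iff.1 hc _ ⟨n, rfl⟩
  have hinter : ∀ n, φ n ∈ C → n = 1 := fun n hn => by
    refine Equiv.Perm.eq_one_of_forall_commute (by simp; omega) fun m => ?_
    exact hφ (by rw [map_mul, map_mul, hcomm _ hn])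
  have hCne : C ≠ ⊥ := fun h => hne <| by
    refine eq_top_iff.2 fun g _ => ?_
    obtain ⟨n, c, hc, rfl⟩ := hsplit g
    rw [h, Subgroup.mem_bot] at hc
    exact ⟨n, by rw [hc, mul_one]⟩
  have hcard : Nat.card C ≠ 1 := fun h => hCne (Subgroup.card_eq_one.1 h)
  obtain ⟨p, hp, hpC⟩ := Nat.exists_prime_and_dvd hcard
  have : Fact p.Prime := ⟨hp⟩
  obtain ⟨⟨g, hg⟩, hord⟩ := exists_prime_orderOf_dvd_card' p hpC
  have hord : orderOf g = p := by rw [← hord, Subgroup.orderOf_mk]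
  have hzC : Subgroup.zpowers g ≤ C := Subgroup.zpowers_le.2 hg
  let ψ : Equiv.Perm (Fin d) × Subgroup.zpowers g →* G :=
    φ.noncommCoprod (Subgroup.zpowers g).subtype fun n c => hcomm c (hzC c.2) n
  have hψinj : Function.Injective ψ := by
    rw [injective_iff_map_eq_one]
    rintro ⟨n, c, hc⟩ h
    replace h : φ n * c = 1 := h
    have hn : n = 1 := hinter n (by rw [eq_inv_of_mul_eq_one_left h]; exact inv_mem (hzC hc))
    subst hn
    simpa using h
  have hle : φ.range ≤ ψ.range := by
    rintro _ ⟨n, rfl⟩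
    exact ⟨(n, 1), mul_one (φ n)⟩
  have hψtop : ψ.range = ⊤ := (hmin _ hle).resolve_left fun h => by
    have hgψ : g ∈ ψ.range := ⟨(1, ⟨g, Subgroup.mem_zpowers g⟩), by
      change φ 1 * g = g
      rw [map_one, one_mul]⟩
    rw [h] at hgψ
    obtain ⟨n, rfl⟩ := hgψ
    rw [hinter n hg, map_one, orderOf_one] at hord
    exact hp.one_lt.ne hord
  let e : Equiv.Perm (Fin d) × Subgroup.zpowers g ≃* G :=
    MulEquiv.ofBijective ψ ⟨hψinj, MonoidHom.range_eq_top.1 hψtop⟩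
  let e' : Subgroup.zpowers g ≃* Multiplicative (ZMod p) :=
    mulEquivOfPrimeCardEq (p := p) (by rw [Nat.card_zpowers, hord]) (by simp)
  refine ⟨p, hp, g, hord, ?_, ⟨e.symm.trans ((MulEquiv.refl _).prodCongr e')⟩⟩
  rintro _ ⟨n, rfl⟩
  exact (hcomm g hg n).symm
end
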